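/- arXiv:2401.08385 — 3 statements merged into one kernel-verified Lean document; each statement's English description precedes it below -/
import Mathlib

section
/- (Relational Recursion, Theorem 2.) Let ψ be a procedure environment and Φ a relational contract environment. Assume: (i) for every procedure environment ψ', if ψ' ⊨ Φ then for every nonempty sequence of procedure names (y_k)_{k=1}^n, the relational Hoare triple ψ' ⊨ {pre_Φ((y_k))} (ψ(y_k))_{k=1}^n {post_Φ((y_k))} holds (i.e., the sequence of bodies taken from ψ satisfies the relational contract when executed under ψ'); and (ii) if ψ ⊨ Φ then ψ ⊨ {P} (c_k)_{k=1}^n {Q}. Then ψ ⊨ {P} (c_k)_{k=1}^n {Q}. -/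
/-- Memory states: location `x_i` holds value `σ i`. -/
abbrev Mem : Type := ℕ → ℕ

/-- Update `σ[i/n]`: maps `i` to `n` and agrees with `σ` elsewhere. -/
def Mem.update (σ : Mem) (i n : ℕ) : Mem := fun j => if j = i then n else σ j

inductive Aop : Type
  | add | mul | sub

def Aop.eval : Aop → ℕ → ℕ → ℕ
  | .add => fun m n => m + n
  | .mul => fun m n => m * n
  | .sub => fun m n => m - n

/-- Arithmetic expressions. -/
inductive Aexp : Type
  | const : ℕ → Aexp
  | loc : ℕ → Aexp
  | deref : ℕ → Aexp
  | addr : ℕ → Aexp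
  | binop : Aop → Aexp → Aexp → Aexp

def Aexp.eval : Aexp → Mem → ℕ
  | .const n, _ => n
  | .loc i, σ => σ i
  | .deref i, σ => σ (σ i)
  | .addr i, _ => i
  | .binop o a1 a2, σ => o.eval (a1.eval σ) (a2.eval σ)

inductive Bcmp : Type
  | le | lt | eq

def Bcmp.eval : Bcmp → ℕ → ℕ → Bool
  | .le => fun m n => decide (m ≤ n)
  | .lt => fun m n => decide (m < n)
  | .eq => fun m n => decide (m = n)

/-- Boolean expressions. -/
inductive Bexp : Type
  | tt : Bexp
  | ff : Bexp
  | cmp : Bcmp → Aexp → Aexp → Bexp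
  | and : Bexp → Bexp → Bexp
  | or : Bexp → Bexp → Bexp
  | not : Bexp → Bexp

def Bexp.eval : Bexp → Mem → Bool
  | .tt, _ => true
  | .ff, _ => false
  | .cmp o a1 a2, σ => o.eval (a1.eval σ) (a2.eval σ)
  | .and b1 b2, σ => b1.eval σ && b2.eval σ
  | .or b1 b2, σ => b1.eval σ || b2.eval σ
  | .not b, σ => !(b.eval σ)

/-- Commands, over a type `Y` of procedure names. -/
inductive Com (Y : Type) : Type
  | skip : Com Y
  | assign : ℕ → Aexp → Com Y                      -- x_i := a
  | store : ℕ → Aexp → Com Y                       -- *x_i := a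
  | seq : Com Y → Com Y → Com Y
  | assert : (Mem → Prop) → Com Y
  | cond : Bexp → Com Y → Com Y → Com Y
  | while : Bexp → (Mem → Prop) → Com Y → Com Y
  | call : Y → Com Y

/-- Big-step operational semantics `⟨c, σ⟩ →_ψ σ'`. -/
inductive BigStep {Y : Type} (ψ : Y → Com Y) : Com Y → Mem → Mem → Prop
  | skip (σ : Mem) : BigStep ψ .skip σ σ
  | assign (i : ℕ) (a : Aexp) (σ : Mem) :
      BigStep ψ (.assign i a) σ (σ.update i (a.eval σ))
  | store (i : ℕ) (a : Aexp) (σ : Mem) :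
      BigStep ψ (.store i a) σ (σ.update (σ i) (a.eval σ))
  | seq {c1 c2 : Com Y} {σ σ'' σ' : Mem} :
      BigStep ψ c1 σ σ'' → BigStep ψ c2 σ'' σ' → BigStep ψ (.seq c1 c2) σ σ'
  | assert (P : Mem → Prop) (σ : Mem) : BigStep ψ (.assert P) σ σ
  | condTrue {b : Bexp} {c1 c2 : Com Y} {σ σ' : Mem} :
      b.eval σ = true → BigStep ψ c1 σ σ' → BigStep ψ (.cond b c1 c2) σ σ'
  | condFalse {b : Bexp} {c1 c2 : Com Y} {σ σ' : Mem} :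
      b.eval σ = false → BigStep ψ c2 σ σ' → BigStep ψ (.cond b c1 c2) σ σ'
  | whileTrue {b : Bexp} {I : Mem → Prop} {c : Com Y} {σ σ'' σ' : Mem} :
      b.eval σ = true → BigStep ψ c σ σ'' → BigStep ψ (.while b I c) σ'' σ' →
      BigStep ψ (.while b I c) σ σ'
  | whileFalse {b : Bexp} {I : Mem → Prop} {c : Com Y} {σ : Mem} :
      b.eval σ = false → BigStep ψ (.while b I c) σ σ
  | call {y : Y} {σ σ' : Mem} : BigStep ψ (ψ y) σ σ' → BigStep ψ (.call y) σ σ'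

/-- Hoare triple `ψ ⊨ {P} c {Q}`. -/
def HoareTriple {Y : Type} (ψ : Y → Com Y) (P : Mem → Prop) (c : Com Y)
    (Q : Mem → Mem → Prop) : Prop :=
  ∀ σ σ' : Mem, P σ → BigStep ψ c σ σ' → Q σ σ'

/-- A contract: a precondition and a postcondition. -/
abbrev Contract : Type := (Mem → Prop) × (Mem → Mem → Prop)

/-- Contract validity `ψ ⊨ φ`. -/
def ContractValid {Y : Type} (ψ : Y → Com Y) (φ : Y → Contract) : Prop :=
  ∀ y : Y, HoareTriple ψ (φ y).1 (.call y) (φ y).2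

/-- Pointwise big-step execution of a sequence of commands. -/
inductive BigSteps {Y : Type} (ψ : Y → Com Y) : List (Com Y) → List Mem → List Mem → Prop
  | nil : BigSteps ψ [] [] []
  | cons {c : Com Y} {cs : List (Com Y)} {σ σ' : Mem} {σs σs' : List Mem} :
      BigStep ψ c σ σ' → BigSteps ψ cs σs σs' →
      BigSteps ψ (c :: cs) (σ :: σs) (σ' :: σs')

/-- Relational Hoare triple `ψ ⊨ {P} (c_k) {Q}`. -/
def RHoare {Y : Type} (ψ : Y → Com Y) (P : List Mem → Prop) (cs : List (Com Y))
    (Q : List Mem → List Mem → Prop) : Prop :=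
  ∀ σs σs' : List Mem, P σs → BigSteps ψ cs σs σs' → Q σs σs'

/-- A relational contract: a relational precondition and postcondition. -/
abbrev RContract : Type := (List Mem → Prop) × (List Mem → List Mem → Prop)

/-- Relational contract validity `ψ ⊨ Φ`. -/
def RContractValid {Y : Type} (ψ : Y → Com Y) (Φ : List Y → RContract) : Prop :=
  ∀ ys : List Y, ys ≠ [] → RHoare ψ (Φ ys).1 (ys.map Com.call) (Φ ys).2

/-- Optimized main VC function `Tc`. -/
def Tc {Y : Type} : Com Y → Mem → Mem → (Y → Contract) → (Prop → Prop) → Prop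
  | .skip, σ, σ', _, f => f (σ = σ')
  | .assign i a, σ, σ', _, f => f (σ' = σ.update i (a.eval σ))
  | .store i a, σ, σ', _, f => f (σ' = σ.update (σ i) (a.eval σ))
  | .assert P', σ, σ', _, f => f (P' σ ∧ σ = σ')
  | .seq c0 c1, σ, σ', φ, f =>
      ∀ σ'' : Mem, Tc c0 σ σ'' φ (fun p1 => Tc c1 σ'' σ' φ (fun p2 => f (p1 ∧ p2)))
  | .cond b c0 c1, σ, σ', φ, f =>
      Tc c0 σ σ' φ (fun p1 => Tc c1 σ σ' φ (fun p2 =>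
        f ((b.eval σ = true → p1) ∧ (b.eval σ = false → p2))))
  | .call y, σ, σ', φ, f => f ((φ y).1 σ ∧ (φ y).2 σ σ')
  | .while b I _, σ, σ', _, f => f (I σ ∧ I σ' ∧ b.eval σ' = false)

/-- Optimized auxiliary VC function `Ta`. -/
def Ta {Y : Type} : Com Y → Mem → (Y → Contract) → Prop
  | .skip, _, _ => True
  | .assign _ _, _, _ => True
  | .store _ _, _, _ => True
  | .assert P', σ, _ => P' σ
  | .seq c0 c1, σ, φ =>
      Ta c0 σ φ ∧ ∀ σ' : Mem, Tc c0 σ σ' φ (fun p => p → Ta c1 σ' φ)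
  | .cond b c0 c1, σ, φ =>
      (b.eval σ = true → Ta c0 σ φ) ∧ (b.eval σ = false → Ta c1 σ φ)
  | .call y, σ, φ => (φ y).1 σ
  | .while b I c, σ, φ =>
      I σ ∧ (∀ σ' : Mem, I σ' → b.eval σ' = true → Ta c σ' φ) ∧
      (∀ σ' σ'' : Mem, I σ' → Tc c σ' σ'' φ (fun p => p → I σ''))

/-- Optimized procedure VC `Tf`. -/
def Tf {Y : Type} (φ : Y → Contract) (ψ : Y → Com Y) : Prop :=
  ∀ (y : Y) (σ σ' : Mem), (φ y).1 σ →
    Ta (ψ y) σ φ ∧ Tc (ψ y) σ σ' φ (fun p => p → (φ y).2 σ σ')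

/-- Naive main VC function `Tcⁿ`. -/
def Tcn {Y : Type} : Com Y → Mem → (Y → Contract) → (Mem → Prop) → Prop
  | .skip, σ, _, P => P σ
  | .assign i a, σ, _, P => P (σ.update i (a.eval σ))
  | .store i a, σ, _, P => P (σ.update (σ i) (a.eval σ))
  | .assert P', σ, _, P => P' σ → P σ
  | .seq c0 c1, σ, φ, P => Tcn c0 σ φ (fun σ'' => Tcn c1 σ'' φ P)
  | .cond b c0 c1, σ, φ, P =>
      (b.eval σ = true → Tcn c0 σ φ P) ∧ (b.eval σ = false → Tcn c1 σ φ P)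
  | .call y, σ, φ, P => ∀ σ' : Mem, (φ y).1 σ ∧ (φ y).2 σ σ' → P σ'
  | .while b I _, σ, _, P => ∀ σ' : Mem, I σ ∧ I σ' ∧ b.eval σ' = false → P σ'

/-- Naive auxiliary VC function `Taⁿ`. -/
def Tan {Y : Type} : Com Y → Mem → (Y → Contract) → Prop
  | .skip, _, _ => True
  | .assign _ _, _, _ => True
  | .store _ _, _, _ => True
  | .assert P', σ, _ => P' σ
  | .seq c0 c1, σ, φ => Tan c0 σ φ ∧ Tcn c0 σ φ (fun σ' => Tan c1 σ' φ)
  | .cond b c0 c1, σ, φ =>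
      (b.eval σ = true → Tan c0 σ φ) ∧ (b.eval σ = false → Tan c1 σ φ)
  | .call y, σ, φ => (φ y).1 σ
  | .while b I c, σ, φ =>
      I σ ∧ (∀ σ' : Mem, I σ' → b.eval σ' = true → Tan c σ' φ ∧ Tcn c σ' φ I)

/-- Naive procedure VC `Tfⁿ`. -/
def Tfn {Y : Type} (φ : Y → Contract) (ψ : Y → Com Y) : Prop :=
  ∀ (y : Y) (σ : Mem), (φ y).1 σ →
    Tan (ψ y) σ φ ∧ Tcn (ψ y) σ φ (fun σ' => (φ y).2 σ σ')

/-- Relational VC function `Tr` (recursion over the sequence of commands). -/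
def Tr {Y : Type} : List (Com Y) → List Mem → List Mem → (Y → Contract) →
    (Prop → Prop) → Prop
  | [], [], [], _, f => f True
  | c :: cs, σ :: σs, σ' :: σs', φ, f =>
      Tc c σ σ' φ (fun pn => Tr cs σs σs' φ (fun pm => f (pn ∧ pm)))
  | _, _, _, _, _ => True

/-- Relational auxiliary VC function `Ta_r`. -/
def Tar {Y : Type} : List (Com Y) → List Mem → (Y → Contract) → Prop
  | [], [], _ => True
  | c :: cs, σ :: σs, φ => Ta c σ φ ∧ Tar cs σs φ
  | _, _, _ => True

/-- `Proccall(y, σ, σ', ψ)`. -/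
def Proccall {Y : Type} (y : Y) (σ σ' : Mem) (ψ : Y → Com Y) : Prop :=
  BigStep ψ (.call y) σ σ'

/-- `Procpred`: all the calls of the sequence have taken place. -/
def Procpred {Y : Type} (ψ : Y → Com Y) : List Y → List Mem → List Mem → Prop
  | [], [], [] => True
  | y :: ys, σ :: σs, σ' :: σs' => Proccall y σ σ' ψ ∧ Procpred ψ ys σs σs'
  | _, _, _ => False

/-- `Tpr`: translation of the relational contracts into a logical formula. -/
def Tpr {Y : Type} (Φ : List Y → RContract) (ψ : Y → Com Y) : Prop :=
  ∀ (ys : List Y) (σs σs' : List Mem), ys ≠ [] →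
    Procpred ψ ys σs σs' → (Φ ys).1 σs → (Φ ys).2 σs σs'

/-- `Φcall`: reduce singleton relational contracts to standard contracts with
tracked calls. -/
def Phicall {Y : Type} (Φ : List Y → RContract) (ψ : Y → Com Y) : Y → Contract :=
  fun y =>
    (fun σ => (Φ [y]).1 [σ],
     fun σ σ' => (Φ [y]).2 [σ] [σ'] ∧ Proccall y σ σ' ψ)

/-- Relational procedure VC `Tf_r`. -/
def Tfr {Y : Type} (Φ : List Y → RContract) (ψ : Y → Com Y) : Prop :=
  ∀ (ys : List Y) (σs σs' : List Mem) (ψ' : Y → Com Y),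
    (Φ ys).1 σs → Tpr Φ ψ' →
    Tar (ys.map ψ) σs (Phicall Φ ψ') ∧
    Tr (ys.map ψ) σs σs' (Phicall Φ ψ')
      (fun p => p → (Φ ys).2 σs σs')

/-- The recursive summation command `c_sum`. -/
def csum : Com Unit :=
  .cond (.cmp .lt (.loc 1) (.loc 2))
    (.seq (.assign 3 (.binop .add (.loc 3) (.loc 1)))
      (.seq (.assign 1 (.binop .add (.loc 1) (.const 1)))
        (.call ())))
    .skip

/-- The procedure environment binding `y_sum` to `c_sum`. -/
def psum : Unit → Com Unit := fun _ => csum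

/-- Replace every call by a command. -/
def Com.inl {Y : Type} (θ : Y → Com Y) : Com Y → Com Y
  | .skip => .skip
  | .assign i a => .assign i a
  | .store i a => .store i a
  | .seq c1 c2 => .seq (c1.inl θ) (c2.inl θ)
  | .assert P => .assert P
  | .cond b c1 c2 => .cond b (c1.inl θ) (c2.inl θ)
  | .while b I c => .while b I (c.inl θ)
  | .call y => θ y

/-- The `k`-th inlining of the environment `ψ`. -/
def inlEnv {Y : Type} (ψ : Y → Com Y) : ℕ → Y → Com Y
  | 0, _ => .while .tt (fun _ => True) .skip
  | k + 1, y => (ψ y).inl (inlEnv ψ k)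

theorem Com.inl_call {Y : Type} (c : Com Y) : c.inl Com.call = c := by
  induction c <;> simp_all [Com.inl]

theorem BigStep.while_mono {Y : Type} {χ ω : Y → Com Y} {b : Bexp} {I : Mem → Prop}
    {c c' : Com Y} (h : ∀ σ σ', BigStep χ c σ σ' → BigStep ω c' σ σ')
    {σ σ' : Mem} (hw : BigStep χ (.while b I c) σ σ') : BigStep ω (.while b I c') σ σ' := by
  generalize hd : Com.while b I c = d at hw
  induction hw with
  | whileTrue hb h1 _ _ ih2 =>
    cases hd
    exact .whileTrue hb (h _ _ h1) (ih2 rfl)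
  | whileFalse hb =>
    cases hd
    exact .whileFalse hb
  | _ => cases hd

theorem BigStep.loop_false {Y : Type} {χ : Y → Com Y} {I : Mem → Prop} {c : Com Y}
    {σ σ' : Mem} (hw : BigStep χ (.while .tt I c) σ σ') : False := by
  generalize hd : Com.while .tt I c = d at hw
  induction hw with
  | whileTrue hb h1 _ _ ih2 => exact ih2 hd
  | whileFalse hb =>
    cases hd
    simp [Bexp.eval] at hb
  | _ => cases hd

theorem BigStep.inl_mono {Y : Type} {χ ω : Y → Com Y} {θ θ' : Y → Com Y}
    (h : ∀ y σ σ', BigStep χ (θ y) σ σ' → BigStep ω (θ' y) σ σ') (c : Com Y) :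
    ∀ σ σ', BigStep χ (c.inl θ) σ σ' → BigStep ω (c.inl θ') σ σ' := by
  induction c with
  | skip => intro σ σ' hs; cases hs; exact .skip _
  | assign i a => intro σ σ' hs; cases hs; exact .assign _ _ _
  | store i a => intro σ σ' hs; cases hs; exact .store _ _ _
  | assert P => intro σ σ' hs; cases hs; exact .assert _ _
  | seq c1 c2 ih1 ih2 =>
    intro σ σ' hs
    cases hs with
    | seq h1 h2 => exact .seq (ih1 _ _ h1) (ih2 _ _ h2)
  | cond b c1 c2 ih1 ih2 =>
    intro σ σ' hs
    cases hs with
    | condTrue hb h1 => exact .condTrue hb (ih1 _ _ h1)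
    | condFalse hb h1 => exact .condFalse hb (ih2 _ _ h1)
  | call y => exact h y
  | _ b I c ih => intro σ σ' hs; exact BigStep.while_mono ih hs

theorem inlEnv_indep {Y : Type} (ψ χ ω : Y → Com Y) (k : ℕ) :
    ∀ y σ σ', BigStep χ (inlEnv ψ k y) σ σ' → BigStep ω (inlEnv ψ k y) σ σ' := by
  induction k with
  | zero => intro y σ σ' hs; exact hs.loop_false.elim
  | succ k ih => intro y; exact BigStep.inl_mono ih (ψ y)

theorem inlEnv_unfold {Y : Type} (ψ : Y → Com Y) (k : ℕ) (y : Y) (σ σ' : Mem)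
    (hs : BigStep (inlEnv ψ (k + 1)) (.call y) σ σ') : BigStep (inlEnv ψ k) (ψ y) σ σ' := by
  cases hs with
  | call hs =>
    have := BigStep.inl_mono (χ := inlEnv ψ (k + 1)) (ω := inlEnv ψ k) (θ := inlEnv ψ k)
      (θ' := Com.call) (fun y σ σ' h => .call (inlEnv_indep ψ _ _ k y σ σ' h)) (ψ y) σ σ' hs
    rwa [Com.inl_call] at this

theorem BigSteps.map_mono {Y : Type} {χ ω : Y → Com Y} {f g : Y → Com Y}
    (h : ∀ y σ σ', BigStep χ (f y) σ σ' → BigStep ω (g y) σ σ') (ys : List Y) :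
    ∀ σs σs', BigSteps χ (ys.map f) σs σs' → BigSteps ω (ys.map g) σs σs' := by
  induction ys with
  | nil => intro σs σs' hs; cases hs; exact .nil
  | cons y ys ih =>
    intro σs σs' hs
    cases hs with
    | cons h1 h2 => exact .cons (h _ _ _ h1) (ih _ _ h2)

theorem BigStep.exists_inl {Y : Type} {ψ : Y → Com Y} (χ : Y → Com Y) {c : Com Y} {σ σ' : Mem}
    (hs : BigStep ψ c σ σ') : ∃ k, ∀ j, k ≤ j → BigStep χ (c.inl (inlEnv ψ j)) σ σ' := by
  induction hs with
  | skip => exact ⟨0, fun _ _ => .skip _⟩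
  | assign => exact ⟨0, fun _ _ => .assign _ _ _⟩
  | store => exact ⟨0, fun _ _ => .store _ _ _⟩
  | assert => exact ⟨0, fun _ _ => .assert _ _⟩
  | seq _ _ ih1 ih2 =>
    obtain ⟨k1, h1⟩ := ih1
    obtain ⟨k2, h2⟩ := ih2
    exact ⟨max k1 k2, fun j hj => .seq (h1 j (by omega)) (h2 j (by omega))⟩
  | condTrue hb _ ih =>
    obtain ⟨k, h⟩ := ih
    exact ⟨k, fun j hj => .condTrue hb (h j hj)⟩
  | condFalse hb _ ih =>
    obtain ⟨k, h⟩ := ih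
    exact ⟨k, fun j hj => .condFalse hb (h j hj)⟩
  | whileTrue hb _ _ ih1 ih2 =>
    obtain ⟨k1, h1⟩ := ih1
    obtain ⟨k2, h2⟩ := ih2
    exact ⟨max k1 k2, fun j hj => .whileTrue hb (h1 j (by omega)) (h2 j (by omega))⟩
  | whileFalse hb => exact ⟨0, fun _ _ => .whileFalse hb⟩
  | call _ ih =>
    obtain ⟨k, h⟩ := ih
    refine ⟨k + 1, fun j hj => ?_⟩
    obtain ⟨i, rfl⟩ : ∃ i, j = i + 1 := ⟨j - 1, by omega⟩
    exact h i (by omega)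

theorem BigStep.exists_call {Y : Type} {ψ : Y → Com Y} {y : Y} {σ σ' : Mem}
    (hs : BigStep ψ (.call y) σ σ') :
    ∃ k, ∀ j, k ≤ j → BigStep (inlEnv ψ j) (.call y) σ σ' := by
  obtain ⟨k, h⟩ := hs.exists_inl ψ
  exact ⟨k, fun j hj => .call (inlEnv_indep ψ _ _ j y _ _ (h j hj))⟩

theorem BigSteps.exists_calls {Y : Type} {ψ : Y → Com Y} (ys : List Y) :
    ∀ σs σs', BigSteps ψ (ys.map Com.call) σs σs' →
      ∃ k, ∀ j, k ≤ j → BigSteps (inlEnv ψ j) (ys.map Com.call) σs σs' := by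
  induction ys with
  | nil => intro σs σs' hs; cases hs; exact ⟨0, fun _ _ => .nil⟩
  | cons y ys ih =>
    intro σs σs' hs
    cases hs with
    | cons h1 h2 =>
      obtain ⟨k1, g1⟩ := h1.exists_call
      obtain ⟨k2, g2⟩ := ih _ _ h2
      exact ⟨max k1 k2, fun j hj => .cons (g1 j (by omega)) (g2 j (by omega))⟩

/-- Theorem 2 (Relational Recursion). -/
theorem relational_recursion {Y : Type} (ψ : Y → Com Y) (Φ : List Y → RContract)
    (P : List Mem → Prop) (cs : List (Com Y)) (Q : List Mem → List Mem → Prop)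
    (h1 : ∀ ψ' : Y → Com Y, RContractValid ψ' Φ →
      ∀ ys : List Y, ys ≠ [] → RHoare ψ' (Φ ys).1 (ys.map ψ) (Φ ys).2)
    (h2 : RContractValid ψ Φ → RHoare ψ P cs Q) :
    RHoare ψ P cs Q := by
  apply h2
  have hk : ∀ k, RContractValid (inlEnv ψ k) Φ := by
    intro k
    induction k with
    | zero =>
      intro ys hne σs σs' _ hs
      cases ys with
      | nil => exact absurd rfl hne
      | cons y ys =>
        cases hs with
        | cons h _ =>
          cases h with
          | call h => exact h.loop_false.elim
    | succ k ih =>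
      intro ys hne σs σs' hp hs
      exact h1 _ ih ys hne σs σs' hp (BigSteps.map_mono (inlEnv_unfold ψ k) ys _ _ hs)
  intro ys hne σs σs' hp hs
  obtain ⟨k, h⟩ := BigSteps.exists_calls ys _ _ hs
  exact hk k ys hne σs σs' hp (h k le_rfl)
end

section
/- (Lemma 3: optimized procedure VC implies naive procedure VC.) For every procedure environment ψ and contract environment φ, if Tf(φ, ψ) holds, then Tfⁿ(φ, ψ) holds. -/
/-- Input-output relation described by the main VC functions. -/
def RelC {Y : Type} (φ : Y → Contract) : Com Y → Mem → Mem → Prop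
  | .skip, σ, σ' => σ = σ'
  | .assign i a, σ, σ' => σ' = σ.update i (a.eval σ)
  | .store i a, σ, σ' => σ' = σ.update (σ i) (a.eval σ)
  | .assert P', σ, σ' => P' σ ∧ σ = σ'
  | .seq c0 c1, σ, σ' => ∃ σ'' : Mem, RelC φ c0 σ σ'' ∧ RelC φ c1 σ'' σ'
  | .cond b c0 c1, σ, σ' =>
      (b.eval σ = true ∧ RelC φ c0 σ σ') ∨ (b.eval σ = false ∧ RelC φ c1 σ σ')
  | .call y, σ, σ' => (φ y).1 σ ∧ (φ y).2 σ σ'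
  | .while b I _, σ, σ' => I σ ∧ I σ' ∧ b.eval σ' = false

theorem Tc_exists {Y : Type} (φ : Y → Contract) (c : Com Y) :
    ∀ (σ σ' : Mem) (f : Prop → Prop), Tc c σ σ' φ f → ∃ p, f p := by
  induction c with
  | seq c0 c1 ih0 ih1 =>
    intro σ σ' f h
    obtain ⟨p1, h1⟩ := ih0 _ _ _ (h σ)
    obtain ⟨p2, h2⟩ := ih1 _ _ _ h1
    exact ⟨_, h2⟩
  | cond b c0 c1 ih0 ih1 =>
    intro σ σ' f h
    obtain ⟨p1, h1⟩ := ih0 _ _ _ h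
    obtain ⟨p2, h2⟩ := ih1 _ _ _ h1
    exact ⟨_, h2⟩
  | _ => intro σ σ' f h; exact ⟨_, h⟩

theorem Tc_exists_true {Y : Type} (φ : Y → Contract) (c : Com Y) :
    ∀ (σ σ' : Mem) (f : Prop → Prop), Tc c σ σ' φ f → RelC φ c σ σ' → ∃ p, p ∧ f p := by
  induction c with
  | seq c0 c1 ih0 ih1 =>
    rintro σ σ' f h ⟨σ'', r0, r1⟩
    obtain ⟨p1, t1, h1⟩ := ih0 _ _ _ (h σ'') r0
    obtain ⟨p2, t2, h2⟩ := ih1 _ _ _ h1 r1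
    exact ⟨_, ⟨t1, t2⟩, h2⟩
  | cond b c0 c1 ih0 ih1 =>
    rintro σ σ' f h (⟨hb, r⟩ | ⟨hb, r⟩)
    · obtain ⟨p1, t1, h1⟩ := ih0 _ _ _ h r
      obtain ⟨p2, h2⟩ := Tc_exists φ c1 _ _ _ h1
      exact ⟨_, ⟨fun _ => t1, fun hb' => by simp [hb] at hb'⟩, h2⟩
    · obtain ⟨p1, h1⟩ := Tc_exists φ c0 _ _ _ h
      obtain ⟨p2, t2, h2⟩ := ih1 _ _ _ h1 r
      exact ⟨_, ⟨fun hb' => by simp [hb] at hb', fun _ => t2⟩, h2⟩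
  | _ => intro σ σ' f h r; exact ⟨_, r, h⟩

theorem Tcn_of_RelC {Y : Type} (φ : Y → Contract) (c : Com Y) :
    ∀ (σ : Mem) (P : Mem → Prop), (∀ σ', RelC φ c σ σ' → P σ') → Tcn c σ φ P := by
  induction c with
  | skip => intro σ P h; exact h _ rfl
  | assign i a => intro σ P h; exact h _ rfl
  | store i a => intro σ P h; exact h _ rfl
  | assert P' => intro σ P h hp; exact h _ ⟨hp, rfl⟩
  | seq c0 c1 ih0 ih1 =>
    intro σ P h
    exact ih0 _ _ fun σ'' r0 => ih1 _ _ fun σ' r1 => h _ ⟨σ'', r0, r1⟩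
  | cond b c0 c1 ih0 ih1 =>
    intro σ P h
    exact ⟨fun hb => ih0 _ _ fun σ' r => h _ (Or.inl ⟨hb, r⟩),
      fun hb => ih1 _ _ fun σ' r => h _ (Or.inr ⟨hb, r⟩)⟩
  | call y => intro σ P h; exact h
  | _ => intro σ P h; exact h

theorem Tcn_of_Tc {Y : Type} (φ : Y → Contract) (c : Com Y) (σ : Mem) (P : Mem → Prop)
    (h : ∀ σ', Tc c σ σ' φ (fun p => p → P σ')) : Tcn c σ φ P := by
  refine Tcn_of_RelC φ c σ P fun σ' r => ?_
  obtain ⟨p, t, hp⟩ := Tc_exists_true φ c _ _ _ (h σ') r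
  exact hp t

theorem Tcn_mono {Y : Type} (φ : Y → Contract) (c : Com Y) :
    ∀ (σ : Mem) (P Q : Mem → Prop), (∀ σ', P σ' → Q σ') → Tcn c σ φ P → Tcn c σ φ Q := by
  induction c with
  | skip => intro σ P Q h; exact h _
  | assign i a => intro σ P Q h; exact h _
  | store i a => intro σ P Q h; exact h _
  | assert P' => intro σ P Q h hp h'; exact h _ (hp h')
  | seq c0 c1 ih0 ih1 =>
    intro σ P Q h
    exact ih0 _ _ _ fun σ'' => ih1 _ _ _ h
  | cond b c0 c1 ih0 ih1 =>
    intro σ P Q h hp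
    exact ⟨fun hb => ih0 _ _ _ h (hp.1 hb), fun hb => ih1 _ _ _ h (hp.2 hb)⟩
  | call y => intro σ P Q h hp σ' r; exact h _ (hp _ r)
  | _ => intro σ P Q h hp σ' r; exact h _ (hp _ r)

theorem Tan_of_Ta {Y : Type} (φ : Y → Contract) (c : Com Y) :
    ∀ σ : Mem, Ta c σ φ → Tan c σ φ := by
  induction c with
  | seq c0 c1 ih0 ih1 =>
    intro σ h
    exact ⟨ih0 _ h.1, Tcn_mono φ c0 _ _ _ ih1 (Tcn_of_Tc φ c0 σ _ h.2)⟩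
  | cond b c0 c1 ih0 ih1 =>
    intro σ h
    exact ⟨fun hb => ih0 _ (h.1 hb), fun hb => ih1 _ (h.2 hb)⟩
  | skip => intro σ h; exact h
  | assign i a => intro σ h; exact h
  | store i a => intro σ h; exact h
  | assert P' => intro σ h; exact h
  | call y => intro σ h; exact h
  | _ =>
    rename_i b I c ih
    intro σ h
    exact ⟨h.1, fun σ' hI hb => ⟨ih _ (h.2.1 σ' hI hb),
      Tcn_of_Tc φ c σ' I fun σ'' => h.2.2 σ' σ'' hI⟩⟩

/-- Lemma 3: the optimized procedure VC implies the naive procedure VC. -/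
theorem tf_opt_implies_naive {Y : Type} (ψ : Y → Com Y) (φ : Y → Contract)
    (h : Tf φ ψ) : Tfn φ ψ := by
  intro y σ hp
  exact ⟨Tan_of_Ta φ _ σ (h y σ σ hp).1, Tcn_of_Tc φ _ σ _ fun σ' => (h y σ σ' hp).2⟩
end

section
/- (Theorem 3: Soundness of the optimized VCGen.) Let ψ be a procedure environment, φ a contract environment, c a command, P a precondition and Q a postcondition. Assume: (i) Tf(φ, ψ); (ii) for all memory states σ, P(σ) implies Ta⟦c⟧(σ, φ); and (iii) for all memory states σ, σ', P(σ) implies Tc⟦c⟧(σ, σ', φ, λp. p ⇒ Q(σ, σ')). Then the Hoare triple ψ ⊨ {P} c {Q} holds. -/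
/-- Along a terminating execution satisfying the auxiliary VC, `Tc` yields its
continuation at a true proposition. -/
theorem Tc_true {Y : Type} (ψ : Y → Com Y) (φ : Y → Contract) (hf : Tf φ ψ)
    {c : Com Y} {σ σ' : Mem} (h : BigStep ψ c σ σ') :
    Ta c σ φ → ∀ f : Prop → Prop, Tc c σ σ' φ f → f True := by
  have key : ∀ (f : Prop → Prop) {p : Prop}, p → f p → f True := by
    intro f p hp h
    rwa [eq_true hp] at h
  induction h with
  | skip σ => intro _ f h; exact key f rfl h
  | assign i a σ => intro _ f h; exact key f rfl h
  | store i a σ => intro _ f h; exact key f rfl h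
  | assert P σ => intro ha f h; exact key f ⟨ha, rfl⟩ h
  | @seq c1 c2 σ σ'' σ' _ _ ih1 ih2 =>
    intro ha f h
    have ha2 := ih1 ha.1 _ (ha.2 σ'') trivial
    have h4 := ih2 ha2 _ (ih1 ha.1 _ (h σ''))
    exact key f ⟨trivial, trivial⟩ h4
  | condTrue hb _ ih =>
    intro ha f h
    obtain ⟨p2, h2⟩ := Tc_exists φ _ _ _ _ (ih (ha.1 hb) _ h)
    exact key f ⟨fun _ => trivial, fun hb' => by simp [hb] at hb'⟩ h2
  | condFalse hb _ ih =>
    intro ha f h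
    rw [Tc] at h
    obtain ⟨p1, h1⟩ := Tc_exists φ _ _ _ _ h
    have h4 := ih (ha.2 hb) _ h1
    exact key f ⟨fun hb' => by simp [hb] at hb', fun _ => trivial⟩ h4
  | @whileTrue b I c σ σ'' σ' hb _ _ ih1 ih2 =>
    intro ha f h
    obtain ⟨hI, ha1, ha2⟩ := ha
    have hI2 : I σ'' := ih1 (ha1 σ hI hb) _ (ha2 σ σ'' hI) trivial
    have h3 : True ↔ (I σ'' ∧ I σ' ∧ b.eval σ' = false) :=
      ih2 ⟨hI2, ha1, ha2⟩ (fun p => p ↔ (I σ'' ∧ I σ' ∧ b.eval σ' = false)) Iff.rfl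
    exact key f ⟨hI, (h3.1 trivial).2⟩ h
  | whileFalse hb => intro ha f h; exact key f ⟨ha.1, ha.1, hb⟩ h
  | @call y σ σ' _ ih =>
    intro ha f h
    have hy := hf y σ σ' ha
    exact key f ⟨ha, ih hy.1 _ hy.2 trivial⟩ h

/-- Theorem 3: soundness of the optimized VCGen. -/
theorem vcgen_sound {Y : Type} (ψ : Y → Com Y) (φ : Y → Contract)
    (c : Com Y) (P : Mem → Prop) (Q : Mem → Mem → Prop)
    (h1 : Tf φ ψ)
    (h2 : ∀ σ : Mem, P σ → Ta c σ φ)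
    (h3 : ∀ σ σ' : Mem, P σ → Tc c σ σ' φ (fun p => p → Q σ σ')) :
    HoareTriple ψ P c Q := by 
  intro σ σ' hP h
  exact Tc_true ψ φ h1 h (h2 σ hP) _ (h3 σ σ' hP) trivial
end
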